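/- Let P and R be probability measures on a measurable space and γ ≥ 1. Then the function G : (0,∞) → [0,∞) defined by G(t) = t · E_{1 + (γ−1)/t}(P‖R) is monotonically increasing. -/

import Mathlib

open MeasureTheory Real

/-- The hockey-stick divergence `E_γ(P‖Q) = sup_{A measurable} P(A) - γ Q(A)`. -/
noncomputable def hsDiv {α : Type*} [MeasurableSpace α] (γ : ℝ)
    (P Q : Measure α) : ℝ :=
  ⨆ A : {A : Set α // MeasurableSet A}, ((P A.1).toReal - γ * (Q A.1).toReal)

/-!
For `t > 0`, `t * hsDiv (1 + (γ - 1) / t) P R` is the supremum over measurable `A` of the functions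
`t ↦ (P A - R A) * t + (1 - γ) * R A`, which are affine in `t`. Their intercepts at `0` are at most
`max 0 ((1 - γ) * R univ)`, and the members `A = ∅` and `A = univ` of the family already reach this
value at every `t > 0`. A supremum of affine functions that dominates all their intercepts is
monotone: increasing members push it up, and decreasing members stay below their intercepts.
-/

theorem monotoneOn_of_isLUB_range_mul_add {K ι : Type*} [Ring K] [LinearOrder K] [IsOrderedRing K]
    {a b : ι → K} {G : K → K}
    (hG : ∀ t, 0 < t → IsLUB (Set.range fun i => a i * t + b i) (G t))
    (hb : ∀ t, 0 < t → ∀ i, b i ≤ G t) :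
    MonotoneOn G (Set.Ioi 0) := by
  intro t₁ (ht₁ : 0 < t₁) t₂ (ht₂ : 0 < t₂) h
  refine (hG t₁ ht₁).2 (Set.forall_mem_range.2 fun i => ?_)
  rcases le_total 0 (a i) with ha | ha
  · calc a i * t₁ + b i ≤ a i * t₂ + b i := by gcongr
      _ ≤ G t₂ := (hG t₂ ht₂).1 ⟨i, rfl⟩
  · calc a i * t₁ + b i ≤ b i :=
          add_le_of_nonpos_left (mul_nonpos_of_nonpos_of_nonneg ha ht₁.le)
      _ ≤ G t₂ := hb t₂ ht₂ i

section HockeyStick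

variable {α : Type*} [MeasurableSpace α] (P R : Measure α) [IsFiniteMeasure P] [IsFiniteMeasure R]

theorem isLUB_hsDiv (γ : ℝ) :
    IsLUB (Set.range fun A : {A : Set α // MeasurableSet A} => P.real A - γ * R.real A)
      (hsDiv γ P R) := by
  have : Nonempty {A : Set α // MeasurableSet A} := ⟨⟨∅, .empty⟩⟩
  refine isLUB_ciSup ⟨P.real Set.univ + |γ| * R.real Set.univ, Set.forall_mem_range.2 fun A => ?_⟩
  calc P.real A - γ * R.real A ≤ P.real A + |γ| * R.real A := by
        rw [sub_eq_add_neg, ← neg_mul]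
        gcongr
        exact neg_le_abs γ
    _ ≤ P.real Set.univ + |γ| * R.real Set.univ :=
        add_le_add (measureReal_mono (Set.subset_univ _))
          (mul_le_mul_of_nonneg_left (measureReal_mono (Set.subset_univ _)) (abs_nonneg γ))

variable {t : ℝ}

theorem isLUB_mul_hsDiv_one_add_div (γ : ℝ) (ht : 0 < t) :
    IsLUB (Set.range fun A : {A : Set α // MeasurableSet A} =>
        (P.real A - R.real A) * t + (1 - γ) * R.real A)
      (t * hsDiv (1 + (γ - 1) / t) P R) := by
  have hfactor (A : Set α) : t * (P.real A - (1 + (γ - 1) / t) * R.real A)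
      = (P.real A - R.real A) * t + (1 - γ) * R.real A := by
    field_simp
    ring
  simpa only [← Set.range_comp, Function.comp_def, hfactor] using
    (isLUB_hsDiv P R (1 + (γ - 1) / t)).mul_left ht.le

theorem one_sub_mul_measureReal_le_mul_hsDiv (hRP : R.real Set.univ ≤ P.real Set.univ) (γ : ℝ)
    (ht : 0 < t) (A : Set α) :
    (1 - γ) * R.real A ≤ t * hsDiv (1 + (γ - 1) / t) P R := by
  have hG := (isLUB_mul_hsDiv_one_add_div P R γ ht).1
  rcases le_total 1 γ with hγ | hγ
  · calc (1 - γ) * R.real A ≤ 0 :=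
          mul_nonpos_of_nonpos_of_nonneg (sub_nonpos.2 hγ) measureReal_nonneg
      _ ≤ t * hsDiv (1 + (γ - 1) / t) P R := hG ⟨⟨∅, .empty⟩, by simp⟩
  · calc (1 - γ) * R.real A ≤ (1 - γ) * R.real Set.univ :=
          mul_le_mul_of_nonneg_left (measureReal_mono (Set.subset_univ A)) (sub_nonneg.2 hγ)
      _ ≤ (P.real Set.univ - R.real Set.univ) * t + (1 - γ) * R.real Set.univ :=
          le_add_of_nonneg_left (mul_nonneg (sub_nonneg.2 hRP) ht.le)
      _ ≤ t * hsDiv (1 + (γ - 1) / t) P R := hG ⟨⟨Set.univ, .univ⟩, rfl⟩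

theorem stmt3_general (hRP : R.real Set.univ ≤ P.real Set.univ) (γ : ℝ) :
    MonotoneOn (fun t : ℝ => t * hsDiv (1 + (γ - 1) / t) P R) (Set.Ioi 0) :=
  monotoneOn_of_isLUB_range_mul_add (fun _ ht => isLUB_mul_hsDiv_one_add_div P R γ ht)
    fun _ ht A => one_sub_mul_measureReal_le_mul_hsDiv P R hRP γ ht A

end HockeyStick

theorem stmt3 {α : Type*} [MeasurableSpace α] (P R : Measure α)
    [IsProbabilityMeasure P] [IsProbabilityMeasure R] (γ : ℝ) (hγ : 1 ≤ γ) :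
    ∀ t₁ t₂ : ℝ, 0 < t₁ → t₁ ≤ t₂ →
      t₁ * hsDiv (1 + (γ - 1) / t₁) P R ≤ t₂ * hsDiv (1 + (γ - 1) / t₂) P R :=
  fun _ _ h₁ h₁₂ => stmt3_general P R (by simp) γ h₁ (h₁.trans_le h₁₂) h₁₂
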